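/- Let q be a (sufficiently smooth) solution of the barotropic vorticity equation q_t + J(ψ,q) + βψ_x = f + νΔq − rq, q = Δψ, with boundary conditions q = 0, ψ = 0 on ∂D and initial condition q(·,·,0) = q₀. Then for every T > 0 and all 0 ≤ t ≤ T, ‖q(t)‖² ≤ ‖q₀‖² e^{2|α|T} + (1/r) e^{2|α|T} ∫₀ᵀ ‖f(s)‖² ds, where α = r/2 + πν/|D| − (|β|/2)(|D|/π + 1). -/

import Mathlib

open MeasureTheory Real Filter Topology

/-- Partial derivative in the `x` direction. -/
noncomputable def pdx (u : ℝ × ℝ → ℝ) (p : ℝ × ℝ) : ℝ := fderiv ℝ u p (1, 0)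

/-- Partial derivative in the `y` direction. -/
noncomputable def pdy (u : ℝ × ℝ → ℝ) (p : ℝ × ℝ) : ℝ := fderiv ℝ u p (0, 1)

/-- The Jacobian operator `J(u,v) = u_x v_y - u_y v_x`. -/
noncomputable def jac (u v : ℝ × ℝ → ℝ) (p : ℝ × ℝ) : ℝ :=
  pdx u p * pdy v p - pdy u p * pdx v p

/-- The Laplacian `Δu = u_xx + u_yy`. -/
noncomputable def lap (u : ℝ × ℝ → ℝ) (p : ℝ × ℝ) : ℝ :=
  pdx (pdx u) p + pdy (pdy u) p

/-- The squared `L²(D)` norm `‖u‖² = ∫_D u² dxdy`. -/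
noncomputable def l2sq (D : Set (ℝ × ℝ)) (u : ℝ × ℝ → ℝ) : ℝ :=
  ∫ p in D, (u p) ^ 2

/-- The `L²(D)` norm. -/
noncomputable def l2norm (D : Set (ℝ × ℝ)) (u : ℝ × ℝ → ℝ) : ℝ :=
  Real.sqrt (l2sq D u)

/-- The squared `L²(D)` norm of the gradient, `‖∇u‖² = ∫_D |∇u|² dxdy`. -/
noncomputable def gradsq (D : Set (ℝ × ℝ)) (u : ℝ × ℝ → ℝ) : ℝ :=
  ∫ p in D, ((pdx u p) ^ 2 + (pdy u p) ^ 2)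

/-- The `L²(D)` norm of the gradient. -/
noncomputable def gradNorm (D : Set (ℝ × ℝ)) (u : ℝ × ℝ → ℝ) : ℝ :=
  Real.sqrt (gradsq D u)

/-- The area `|D|` of the domain. -/
noncomputable def area (D : Set (ℝ × ℝ)) : ℝ := (volume D).toReal

/-- The constant `α = r/2 + πν/|D| - (|β|/2)(|D|/π + 1)`. -/
noncomputable def alphaConst (D : Set (ℝ × ℝ)) (β ν r : ℝ) : ℝ :=
  r / 2 + π * ν / area D - |β| / 2 * (area D / π + 1)

/-- A space-time field that is smooth jointly in time and space. -/
def SmoothField (u : ℝ → ℝ × ℝ → ℝ) : Prop :=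
  ContDiff ℝ (⊤ : ℕ∞) (Function.uncurry u)

/-- A space-time field that is mean-square integrable in space and time
(on the time interval `[0,∞)` and the spatial domain `D`). -/
def MeanSquareIntegrable (D : Set (ℝ × ℝ)) (f : ℝ → ℝ × ℝ → ℝ) : Prop :=
  (∀ t, 0 ≤ t → Integrable (fun p => (f t p) ^ 2) (volume.restrict D)) ∧
  (∀ T, 0 < T → IntervalIntegrable (fun t => l2sq D (f t)) volume 0 T)

/-- `SolvesBVE D β ν r q ψ f g` says that the vorticity `q`, with streamfunction `ψ`,
solves the barotropic vorticity equation
`q_t + J(ψ,q) + β ψ_x = f + ν Δq - r q + g` on the domain `D` for all times `t ≥ 0`,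
with the relation `q = Δψ` and zero boundary conditions `q = 0`, `ψ = 0` on `∂D`.
The extra field `g` is an additional forcing term (e.g. a subgrid-scale stress,
a stochastic parameterization, or `0`). -/
def SolvesBVE (D : Set (ℝ × ℝ)) (β ν r : ℝ) (q ψ f g : ℝ → ℝ × ℝ → ℝ) : Prop :=
  (∀ t, 0 ≤ t → ∀ p ∈ D, q t p = lap (ψ t) p) ∧
  (∀ t, 0 ≤ t → ∀ p ∈ frontier D, q t p = 0 ∧ ψ t p = 0) ∧
  (∀ t, 0 ≤ t → ∀ p ∈ D,
    deriv (fun s => q s p) t + jac (ψ t) (q t) p + β * pdx (ψ t) p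
      = f t p + ν * lap (q t) p - r * q t p + g t p)

/-!
Fields vanishing on `∂D` are extended by zero. On a line the extension `𝟙_S g` of a `C¹` function
`g` vanishing on `∂S` is differentiable with derivative `𝟙_S g'` off a countable set: at a boundary
point either `g' = 0`, or the point is an isolated zero of `g`. The fundamental theorem of calculus
therefore holds along every line, and integration by parts on `D` needs no regularity of `∂D`. On
horizontal and vertical lines it also gives
`|u(x, y)| ≤ ½ ∫ |u_x| dx` and `|u(x, y)| ≤ ½ ∫ |u_y| dy`, whose product integrates to
`‖u‖² ≤ ¼ ‖u_x‖₁ ‖u_y‖₁ ≤ (|D|/8) ‖∇u‖²`, which is better than the Poincaré constant `|D|/π`.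

Testing the equation against `2q` kills `J(ψ, q)` and leaves
`d/dt ‖q‖² = 2⟨q, f⟩ - 2ν‖∇q‖² - 2r‖q‖² - 2β⟨q, ψ_x⟩`. Young's inequality absorbs the forcing into
the damping, Poincaré's inequality bounds the diffusion, and `‖∇ψ‖² ≤ (|D|/π) ‖Δψ‖²` bounds the
`β`-term, so `d/dt ‖q‖² ≤ -2α‖q‖² + ‖f‖²/r`; Grönwall's inequality concludes.
-/

section Bounded

variable {E F : Type*} [NormedAddCommGroup E] [ProperSpace E] [MeasurableSpace E] [BorelSpace E]
  [NormedAddCommGroup F] {D : Set E} {w : E → F}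

theorem memLp_restrict_of_isBounded (hDb : Bornology.IsBounded D) (hw : Continuous w)
    {p : ENNReal} {μ : Measure E} [IsFiniteMeasureOnCompacts μ] : MemLp w p (μ.restrict D) := by
  obtain ⟨C, hC⟩ := hDb.isCompact_closure.exists_bound_of_continuousOn hw.continuousOn
  have : IsFiniteMeasure (μ.restrict (closure D)) :=
    isFiniteMeasure_restrict.2 hDb.isCompact_closure.measure_lt_top.ne
  refine MemLp.mono_measure (Measure.restrict_mono_set μ subset_closure) ?_
  exact .of_bound hw.aestronglyMeasurable C
    ((ae_restrict_mem isClosed_closure.measurableSet).mono hC)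

theorem integrableOn_of_isBounded (hDb : Bornology.IsBounded D) (hw : Continuous w)
    {μ : Measure E} [IsFiniteMeasureOnCompacts μ] : IntegrableOn w D μ :=
  memLp_one_iff_integrable.1 (memLp_restrict_of_isBounded hDb hw)

end Bounded

section Line

variable {F : Type*} [NormedAddCommGroup F] [NormedSpace ℝ F] {S : Set ℝ} {g : ℝ → F}

theorem countable_setOf_eq_zero_and_deriv_ne_zero (g : ℝ → F) :
    {t | g t = 0 ∧ deriv g t ≠ 0}.Countable := by
  refine (countable_setOfPred_isolated_right_within (s := {t | g t = 0})).mono ?_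
  rintro t ⟨hgt, hdt⟩
  have hne : ∀ᶠ s in 𝓝[>] t, g s ≠ 0 :=
    nhdsGT_le_nhdsNE t ((differentiableAt_of_deriv_ne_zero hdt).hasDerivAt.eventually_ne hdt)
  refine ⟨hgt, ?_⟩
  rw [Set.inter_comm, nhdsWithin_inter']
  exact inf_principal_eq_bot.2 hne

theorem hasDerivAt_indicator (hS : IsOpen S) {t : ℝ} (hg : DifferentiableAt ℝ g t)
    (h0 : t ∈ frontier S → g t = 0 ∧ deriv g t = 0) :
    HasDerivAt (S.indicator g) (S.indicator (deriv g) t) t := by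
  by_cases ht : t ∈ S
  · rw [Set.indicator_of_mem ht]
    exact hg.hasDerivAt.congr_of_eventuallyEq
      (Set.eqOn_indicator.eventuallyEq_of_mem (hS.mem_nhds ht))
  rw [Set.indicator_of_notMem ht]
  by_cases htc : t ∈ closure S
  · obtain ⟨hgt, hdt⟩ := h0 (hS.frontier_eq ▸ ⟨htc, ht⟩)
    have hlittle : g =o[𝓝 t] fun s => s - t := by
      simpa [hasDerivAt_iff_isLittleO, hgt, hdt] using hg.hasDerivAt
    have hle : S.indicator g =O[𝓝 t] g :=
      Asymptotics.isBigO_of_le _ fun s => norm_indicator_le_norm_self g s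
    simpa [hasDerivAt_iff_isLittleO, ht] using hle.trans_isLittleO hlittle
  · refine (hasDerivAt_const t (0 : F)).congr_of_eventuallyEq ?_
    filter_upwards [isClosed_closure.isOpen_compl.mem_nhds htc] with s hs
    exact Set.indicator_of_notMem (fun hsS => hs (subset_closure hsS)) g

variable [CompleteSpace F]

theorem intervalIntegral_indicator_deriv_eq_sub (hS : IsOpen S) (hg : ContDiff ℝ 1 g)
    (h0 : ∀ t ∈ frontier S, g t = 0) (a b : ℝ) :
    ∫ t in a..b, S.indicator (deriv g) t = S.indicator g b - S.indicator g a := by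
  refine MeasureTheory.integral_eq_of_hasDerivAt_off_countable _ _
    (countable_setOf_eq_zero_and_deriv_ne_zero g)
    (hg.continuous.indicator h0).continuousOn (fun t ht => ?_) ?_
  · refine hasDerivAt_indicator hS (hg.differentiable one_ne_zero t) fun htS => ⟨h0 t htS, ?_⟩
    by_contra hdt
    exact ht.2 ⟨h0 t htS, hdt⟩
  · exact intervalIntegrable_iff.2
      (((hg.continuous_deriv le_rfl).intervalIntegrable a b).def'.indicator hS.measurableSet)

theorem norm_indicator_le_half_integral_norm_indicator_deriv (hS : IsOpen S)
    (hSb : Bornology.IsBounded S) (hg : ContDiff ℝ 1 g) (h0 : ∀ t ∈ frontier S, g t = 0) (t : ℝ) :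
    ‖S.indicator g t‖ ≤ 1 / 2 * ∫ s, ‖S.indicator (deriv g) s‖ := by
  set φ : ℝ → F := S.indicator (deriv g)
  by_cases ht : t ∉ S
  · rw [Set.indicator_of_notMem ht, norm_zero]
    positivity
  rw [not_not] at ht
  obtain ⟨R, hR⟩ := hSb.subset_ball 0
  have hRS : S ⊆ Set.Ioo (-R) R := by simpa [Real.ball_eq_Ioo] using hR
  have hφ : Integrable (fun s => ‖φ s‖) :=
    ((integrableOn_of_isBounded hSb (hg.continuous_deriv le_rfl)).integrable_indicator
      hS.measurableSet).norm
  have hleft : ‖S.indicator g t‖ ≤ ∫ s in -R..t, ‖φ s‖ := by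
    have := intervalIntegral_indicator_deriv_eq_sub hS hg h0 (-R) t
    rw [Set.indicator_of_notMem (fun h => (hRS h).1.false) g, sub_zero] at this
    exact this ▸ intervalIntegral.norm_integral_le_integral_norm (hRS ht).1.le
  have hright : ‖S.indicator g t‖ ≤ ∫ s in t..R, ‖φ s‖ := by
    have := intervalIntegral_indicator_deriv_eq_sub hS hg h0 t R
    rw [Set.indicator_of_notMem (fun h => (hRS h).2.false) g, zero_sub] at this
    rw [← norm_neg, ← this]
    exact intervalIntegral.norm_integral_le_integral_norm (hRS ht).2.le
  have hle : ∫ s in -R..R, ‖φ s‖ ≤ ∫ s, ‖φ s‖ := by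
    rw [intervalIntegral.integral_of_le ((hRS ht).1.trans (hRS ht).2).le]
    exact setIntegral_le_integral hφ (ae_of_all _ fun s => norm_nonneg _)
  rw [← intervalIntegral.integral_add_adjacent_intervals (b := t) hφ.intervalIntegrable
    hφ.intervalIntegrable] at hle
  linarith

end Line

section Directional

variable {E F : Type*} [NormedAddCommGroup E] [NormedSpace ℝ E] [NormedAddCommGroup F]
  [NormedSpace ℝ F] {D : Set E} {w : E → F}

theorem deriv_comp_add_smul (hw : Differentiable ℝ w) (p v : E) :
    deriv (fun t : ℝ => w (p + t • v)) = fun t => fderiv ℝ w (p + t • v) v := by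
  ext t
  have hline : HasDerivAt (fun t : ℝ => p + t • v) v t := by
    simpa using ((hasDerivAt_id t).smul_const v).const_add p
  exact ((hw _).hasFDerivAt.comp_hasDerivAt t hline).deriv

variable [CompleteSpace F]

theorem intervalIntegral_indicator_fderiv_apply_eq_sub (hD : IsOpen D) (hw : ContDiff ℝ 1 w)
    (h0 : ∀ p ∈ frontier D, w p = 0) (p v : E) (a b : ℝ) :
    ∫ t in a..b, D.indicator (fun x => fderiv ℝ w x v) (p + t • v)
      = D.indicator w (p + b • v) - D.indicator w (p + a • v) := by
  have hline : Continuous fun t : ℝ => p + t • v := by fun_prop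
  have := intervalIntegral_indicator_deriv_eq_sub (hD.preimage hline)
    (hw.comp (by fun_prop : ContDiff ℝ 1 fun t : ℝ => p + t • v))
    (fun t ht => h0 _ (hline.frontier_preimage_subset D ht)) a b
  rw [Function.comp_def, deriv_comp_add_smul (hw.differentiable one_ne_zero)] at this
  exact this

theorem norm_indicator_le_half_integral_norm_indicator_fderiv_apply (hD : IsOpen D)
    (hDb : Bornology.IsBounded D) (hw : ContDiff ℝ 1 w) (h0 : ∀ p ∈ frontier D, w p = 0)
    {v : E} (hv : v ≠ 0) (p : E) (t : ℝ) :
    ‖D.indicator w (p + t • v)‖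
      ≤ 1 / 2 * ∫ s : ℝ, ‖D.indicator (fun x => fderiv ℝ w x v) (p + s • v)‖ := by
  have hline : Continuous fun t : ℝ => p + t • v := by fun_prop
  have hSb : Bornology.IsBounded ((fun t : ℝ => p + t • v) ⁻¹' D) := by
    obtain ⟨R, hR⟩ := hDb.subset_closedBall p
    refine (Metric.isBounded_closedBall (x := (0 : ℝ)) (r := R / ‖v‖)).subset fun t ht => ?_
    have := hR ht
    rw [mem_closedBall_iff_norm, add_sub_cancel_left, norm_smul] at this
    rwa [mem_closedBall_zero_iff, le_div_iff₀ (norm_pos_iff.2 hv)]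
  have := norm_indicator_le_half_integral_norm_indicator_deriv (hD.preimage hline) hSb
    (hw.comp (by fun_prop : ContDiff ℝ 1 fun t : ℝ => p + t • v))
    (fun t ht => h0 _ (hline.frontier_preimage_subset D ht)) t
  rw [Function.comp_def, deriv_comp_add_smul (hw.differentiable one_ne_zero)] at this
  exact this

variable [MeasurableSpace E] [BorelSpace E] [SecondCountableTopology E] {μ : Measure E}
  [SFinite μ] [μ.IsAddRightInvariant]

theorem setIntegral_fderiv_apply_eq_zero (hD : IsOpen D) (hw : ContDiff ℝ 1 w)
    (h0 : ∀ p ∈ frontier D, w p = 0) (v : E) (hwi : IntegrableOn w D μ)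
    (hwi' : IntegrableOn (fun p => fderiv ℝ w p v) D μ) :
    ∫ p in D, fderiv ℝ w p v ∂μ = 0 := by
  set φ : E → F := D.indicator fun p => fderiv ℝ w p v
  set ω : E → F := D.indicator w
  have hφ : Integrable φ μ := hwi'.integrable_indicator hD.measurableSet
  have hω : Integrable ω μ := hwi.integrable_indicator hD.measurableSet
  have : IsFiniteMeasure (volume.restrict (Set.uIoc (0 : ℝ) 1)) := by
    rw [Set.uIoc_of_le zero_le_one]
    infer_instance
  have hshear : MeasurePreserving (fun z : ℝ × E => (z.1, z.2 + z.1 • v))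
      ((volume.restrict (Set.uIoc 0 1)).prod μ) ((volume.restrict (Set.uIoc 0 1)).prod μ) :=
    (MeasurePreserving.id _).skew_product
      (by fun_prop : Continuous fun z : ℝ × E => z.2 + z.1 • v).measurable
      (ae_of_all _ fun t => map_add_right_eq_self μ (t • v))
  have hφ_shear : Integrable (fun z : ℝ × E => φ (z.2 + z.1 • v))
      ((volume.restrict (Set.uIoc 0 1)).prod μ) :=
    hshear.integrable_comp_of_integrable (hφ.comp_snd _)
  rw [← integral_indicator hD.measurableSet]
  -- Averaging over the translates `p ↦ p + t • v` avoids splitting `E` into lines parallel to `v`.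
  calc ∫ p, φ p ∂μ = ∫ t in (0 : ℝ)..1, ∫ p, φ (p + t • v) ∂μ := by
        simp [integral_add_right_eq_self]
    _ = ∫ p, (∫ t in (0 : ℝ)..1, φ (p + t • v)) ∂μ :=
        intervalIntegral_integral_swap hφ_shear
    _ = ∫ p, (ω (p + v) - ω p) ∂μ := by
        simp only [φ, ω, intervalIntegral_indicator_fderiv_apply_eq_sub hD hw h0, one_smul,
          zero_smul, add_zero]
    _ = 0 := by
        rw [integral_sub (hω.comp_add_right v) hω, integral_add_right_eq_self, sub_self]

end Directional

section IntegrationByParts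

variable {E : Type*} [NormedAddCommGroup E] [NormedSpace ℝ E] [ProperSpace E] [MeasurableSpace E]
  [BorelSpace E] {μ : Measure E} [IsFiniteMeasureOnCompacts μ] [μ.IsAddRightInvariant]
  {D : Set E} {u v : E → ℝ}

theorem setIntegral_mul_fderiv_apply_eq_neg (hD : IsOpen D) (hDb : Bornology.IsBounded D)
    (hu : ContDiff ℝ 1 u) (hv : ContDiff ℝ 1 v) (h0 : ∀ p ∈ frontier D, u p * v p = 0) (a : E) :
    ∫ p in D, u p * fderiv ℝ v p a ∂μ = -∫ p in D, fderiv ℝ u p a * v p ∂μ := by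
  have hcu : Continuous fun p => fderiv ℝ u p a :=
    (hu.continuous_fderiv one_ne_zero).clm_apply continuous_const
  have hcv : Continuous fun p => fderiv ℝ v p a :=
    (hv.continuous_fderiv one_ne_zero).clm_apply continuous_const
  have hprod : ∀ p, fderiv ℝ (fun p => u p * v p) p a
      = u p * fderiv ℝ v p a + fderiv ℝ u p a * v p := fun p => by
    rw [fderiv_fun_mul (hu.differentiable one_ne_zero p) (hv.differentiable one_ne_zero p)]
    simp [mul_comm]
  have huv := setIntegral_fderiv_apply_eq_zero (μ := μ) hD (hu.mul hv) h0 a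
    (integrableOn_of_isBounded hDb (hu.mul hv).continuous)
    (integrableOn_of_isBounded hDb
      (((hu.mul hv).continuous_fderiv one_ne_zero).clm_apply continuous_const))
  simp only [hprod] at huv
  have hiv : IntegrableOn (fun p => u p * fderiv ℝ v p a) D μ :=
    integrableOn_of_isBounded hDb (hu.continuous.mul hcv)
  have hiu : IntegrableOn (fun p => fderiv ℝ u p a * v p) D μ :=
    integrableOn_of_isBounded hDb (hcu.mul hv.continuous)
  rw [integral_add hiv hiu] at huv
  exact eq_neg_of_add_eq_zero_left huv

end IntegrationByParts

section SquareIntegrable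

variable {Ω : Type*} [MeasurableSpace Ω] {μ : Measure Ω} {f g : Ω → ℝ}

theorem integral_sq_mul_add (hf : MemLp f 2 μ) (hg : MemLp g 2 μ) (c : ℝ) :
    ∫ ω, (c * f ω + g ω) ^ 2 ∂μ
      = (∫ ω, f ω ^ 2 ∂μ) * (c * c) + (2 * ∫ ω, f ω * g ω ∂μ) * c + ∫ ω, g ω ^ 2 ∂μ := by
  have hff : Integrable (fun ω => c * c * f ω ^ 2) μ := hf.integrable_sq.const_mul _
  have hfg : Integrable (fun ω => 2 * c * (f ω * g ω)) μ := (hf.integrable_mul hg).const_mul _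
  have hexpand : ∀ ω, (c * f ω + g ω) ^ 2
      = c * c * f ω ^ 2 + 2 * c * (f ω * g ω) + g ω ^ 2 := fun ω => by ring
  have hsum : Integrable (fun ω => c * c * f ω ^ 2 + 2 * c * (f ω * g ω)) μ := hff.add hfg
  simp only [hexpand]
  rw [integral_add hsum hg.integrable_sq, integral_add hff hfg, integral_const_mul,
    integral_const_mul]
  ring

theorem sq_integral_mul_le (hf : MemLp f 2 μ) (hg : MemLp g 2 μ) :
    (∫ ω, f ω * g ω ∂μ) ^ 2 ≤ (∫ ω, f ω ^ 2 ∂μ) * ∫ ω, g ω ^ 2 ∂μ := by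
  have := discrim_le_zero fun c =>
    integral_sq_mul_add hf hg c ▸ integral_nonneg fun ω => sq_nonneg (c * f ω + g ω)
  rw [discrim] at this
  linarith

theorem sq_integral_abs_le [IsFiniteMeasure μ] (hf : MemLp f 2 μ) :
    (∫ ω, |f ω| ∂μ) ^ 2 ≤ μ.real Set.univ * ∫ ω, f ω ^ 2 ∂μ := by
  simpa [mul_comm] using sq_integral_mul_le hf.abs (memLp_const (1 : ℝ))

theorem two_mul_integral_mul_le (hf : MemLp f 2 μ) (hg : MemLp g 2 μ) {c : ℝ} (hc : 0 < c) :
    2 * ∫ ω, f ω * g ω ∂μ ≤ c * ∫ ω, f ω ^ 2 ∂μ + 1 / c * ∫ ω, g ω ^ 2 ∂μ := by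
  have h : 0 ≤ ∫ ω, (-c * f ω + g ω) ^ 2 ∂μ := integral_nonneg fun ω => sq_nonneg _
  rw [integral_sq_mul_add hf hg] at h
  have := mul_nonneg (one_div_nonneg.2 hc.le) h
  field_simp at this ⊢
  linarith

theorem abs_two_mul_integral_mul_le (hf : MemLp f 2 μ) (hg : MemLp g 2 μ) :
    |2 * ∫ ω, f ω * g ω ∂μ| ≤ ∫ ω, f ω ^ 2 ∂μ + ∫ ω, g ω ^ 2 ∂μ := by
  have hpos := two_mul_integral_mul_le hf hg one_pos
  have hneg := two_mul_integral_mul_le hf.neg hg one_pos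
  simp only [Pi.neg_apply, neg_mul, integral_neg, neg_sq] at hneg
  exact abs_le.2 ⟨by linarith, by linarith⟩

end SquareIntegrable

section Product

variable {X Y : Type*} [MeasurableSpace X] [MeasurableSpace Y] {μ : Measure X} {ν : Measure Y}
  [SFinite μ] [SFinite ν]

theorem integral_prod_sq_le_mul {U : X × Y → ℝ} {a : X → ℝ} {b : Y → ℝ} (hU : ∀ p, 0 ≤ U p)
    (ha : Integrable a μ) (hb : Integrable b ν) (hUa : ∀ x y, U (x, y) ≤ a x)
    (hUb : ∀ x y, U (x, y) ≤ b y) :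
    ∫ p, U p ^ 2 ∂μ.prod ν ≤ (∫ x, a x ∂μ) * ∫ y, b y ∂ν := by
  rw [← integral_prod_mul]
  refine integral_mono_of_nonneg (ae_of_all _ fun p => sq_nonneg _) (ha.mul_prod hb)
    (ae_of_all _ fun p => ?_)
  simpa [sq] using mul_le_mul (hUa p.1 p.2) (hUb p.1 p.2) (hU p) ((hU p).trans (hUa p.1 p.2))

end Product

section Plane

variable {D : Set (ℝ × ℝ)} {u v : ℝ × ℝ → ℝ}

theorem contDiff_pdx {m n : WithTop ℕ∞} (hu : ContDiff ℝ n u) (hmn : m + 1 ≤ n) :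
    ContDiff ℝ m (pdx u) :=
  (hu.fderiv_right hmn).clm_apply contDiff_const

theorem contDiff_pdy {m n : WithTop ℕ∞} (hu : ContDiff ℝ n u) (hmn : m + 1 ≤ n) :
    ContDiff ℝ m (pdy u) :=
  (hu.fderiv_right hmn).clm_apply contDiff_const

theorem continuous_pdx (hu : ContDiff ℝ 1 u) : Continuous (pdx u) :=
  (hu.continuous_fderiv one_ne_zero).clm_apply continuous_const

theorem continuous_pdy (hu : ContDiff ℝ 1 u) : Continuous (pdy u) :=
  (hu.continuous_fderiv one_ne_zero).clm_apply continuous_const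

theorem continuous_lap (hu : ContDiff ℝ 2 u) : Continuous (lap u) :=
  (continuous_pdx (contDiff_pdx hu one_add_one_eq_two.le)).add
    (continuous_pdy (contDiff_pdy hu one_add_one_eq_two.le))

theorem continuous_jac (hu : ContDiff ℝ 1 u) (hv : ContDiff ℝ 1 v) : Continuous (jac u v) :=
  ((continuous_pdx hu).mul (continuous_pdy hv)).sub ((continuous_pdy hu).mul (continuous_pdx hv))

theorem pdy_pdx_eq_pdx_pdy (hu : ContDiff ℝ 2 u) (p : ℝ × ℝ) : pdy (pdx u) p = pdx (pdy u) p := by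
  have hd : DifferentiableAt ℝ (fderiv ℝ u) p :=
    (hu.fderiv_right (m := 1) (by norm_num)).differentiable one_ne_zero p
  have happly : ∀ a b : ℝ × ℝ, fderiv ℝ (fun x => fderiv ℝ u x a) p b
      = fderiv ℝ (fderiv ℝ u) p b a := fun a b => by
    simp [fderiv_clm_apply hd (differentiableAt_const a)]
  have hsymm : IsSymmSndFDerivAt ℝ u p := hu.contDiffAt.isSymmSndFDerivAt (by simp)
  exact (happly _ _).trans ((hsymm _ _).trans (happly _ _).symm)

theorem l2sq_nonneg (D : Set (ℝ × ℝ)) (u : ℝ × ℝ → ℝ) : 0 ≤ l2sq D u :=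
  integral_nonneg fun _ => sq_nonneg _

theorem area_nonneg (D : Set (ℝ × ℝ)) : 0 ≤ area D := ENNReal.toReal_nonneg

theorem gradsq_nonneg (D : Set (ℝ × ℝ)) (u : ℝ × ℝ → ℝ) : 0 ≤ gradsq D u :=
  integral_nonneg fun _ => by positivity

theorem gradsq_eq_l2sq_pdx_add_l2sq_pdy (hDb : Bornology.IsBounded D) (hu : ContDiff ℝ 1 u) :
    gradsq D u = l2sq D (pdx u) + l2sq D (pdy u) :=
  integral_add (integrableOn_of_isBounded hDb ((continuous_pdx hu).pow 2))
    (integrableOn_of_isBounded hDb ((continuous_pdy hu).pow 2))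

theorem l2sq_le_integral_abs_pdx_mul_integral_abs_pdy (hD : IsOpen D)
    (hDb : Bornology.IsBounded D) (hu : ContDiff ℝ 1 u) (h0 : ∀ p ∈ frontier D, u p = 0) :
    l2sq D u ≤ 1 / 4 * ((∫ p in D, |pdx u p|) * ∫ p in D, |pdy u p|) := by
  set U : ℝ × ℝ → ℝ := D.indicator fun p => |u p|
  set A : ℝ × ℝ → ℝ := D.indicator fun p => |pdx u p|
  set B : ℝ × ℝ → ℝ := D.indicator fun p => |pdy u p|
  have hA : Integrable A (volume.prod volume) :=
    (integrableOn_of_isBounded hDb (continuous_pdx hu).abs).integrable_indicator hD.measurableSet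
  have hB : Integrable B (volume.prod volume) :=
    (integrableOn_of_isBounded hDb (continuous_pdy hu).abs).integrable_indicator hD.measurableSet
  have hhoriz : ∀ x y, U (x, y) ≤ 1 / 2 * ∫ s, A (s, y) := fun x y => by
    simpa [norm_indicator_eq_indicator_norm, U, A, pdx] using
      norm_indicator_le_half_integral_norm_indicator_fderiv_apply hD hDb hu h0
        (v := ((1 : ℝ), (0 : ℝ))) (by simp) (0, y) x
  have hvert : ∀ x y, U (x, y) ≤ 1 / 2 * ∫ s, B (x, s) := fun x y => by
    simpa [norm_indicator_eq_indicator_norm, U, B, pdy] using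
      norm_indicator_le_half_integral_norm_indicator_fderiv_apply hD hDb hu h0
        (v := ((0 : ℝ), (1 : ℝ))) (by simp) (x, 0) y
  calc l2sq D u = ∫ p, U p ^ 2 ∂(volume.prod volume) := by
        rw [l2sq, ← integral_indicator hD.measurableSet]
        congr 1 with p
        by_cases hp : p ∈ D <;> simp [U, hp]
    _ ≤ (∫ x, 1 / 2 * ∫ y, B (x, y)) * ∫ y, 1 / 2 * ∫ x, A (x, y) :=
        integral_prod_sq_le_mul (fun p => Set.indicator_nonneg (fun _ _ => abs_nonneg _) p)
          (hB.integral_prod_left.const_mul _) (hA.integral_prod_right.const_mul _) hvert hhoriz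
    _ = 1 / 4 * ((∫ p, A p) * ∫ p, B p) := by
        rw [integral_const_mul, integral_const_mul, ← integral_prod _ hB,
          ← integral_prod_symm _ hA, Measure.volume_eq_prod]
        ring
    _ = 1 / 4 * ((∫ p in D, |pdx u p|) * ∫ p in D, |pdy u p|) := by
        rw [integral_indicator hD.measurableSet, integral_indicator hD.measurableSet]

theorem l2sq_le_area_div_eight_mul_gradsq (hD : IsOpen D) (hDb : Bornology.IsBounded D)
    (hu : ContDiff ℝ 1 u) (h0 : ∀ p ∈ frontier D, u p = 0) :
    l2sq D u ≤ area D / 8 * gradsq D u := by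
  have : IsFiniteMeasure (volume.restrict D) := isFiniteMeasure_restrict.2 hDb.measure_lt_top.ne
  have harea : (volume.restrict D).real Set.univ = area D := by simp [area, Measure.real]
  have hx := sq_integral_abs_le
    (memLp_restrict_of_isBounded hDb (continuous_pdx hu) (μ := volume))
  have hy := sq_integral_abs_le
    (memLp_restrict_of_isBounded hDb (continuous_pdy hu) (μ := volume))
  rw [harea] at hx hy
  set X := ∫ p in D, |pdx u p|
  set Y := ∫ p in D, |pdy u p|
  calc l2sq D u ≤ 1 / 4 * (X * Y) :=
        l2sq_le_integral_abs_pdx_mul_integral_abs_pdy hD hDb hu h0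
    _ ≤ 1 / 8 * (X ^ 2 + Y ^ 2) := by linarith [two_mul_le_add_sq X Y]
    _ ≤ 1 / 8 * (area D * l2sq D (pdx u) + area D * l2sq D (pdy u)) := by
        unfold l2sq
        gcongr
    _ = area D / 8 * gradsq D u := by
        rw [gradsq_eq_l2sq_pdx_add_l2sq_pdy hDb hu]
        ring

theorem l2sq_le_area_div_pi_mul_gradsq (hD : IsOpen D) (hDb : Bornology.IsBounded D)
    (hu : ContDiff ℝ 1 u) (h0 : ∀ p ∈ frontier D, u p = 0) :
    l2sq D u ≤ area D / π * gradsq D u := by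
  refine (l2sq_le_area_div_eight_mul_gradsq hD hDb hu h0).trans
    (mul_le_mul_of_nonneg_right ?_ (gradsq_nonneg D u))
  exact div_le_div_of_nonneg_left (area_nonneg D) pi_pos (by linarith [pi_le_four])

theorem pi_div_area_mul_l2sq_le_gradsq (hD : IsOpen D) (hDb : Bornology.IsBounded D)
    (hu : ContDiff ℝ 1 u) (h0 : ∀ p ∈ frontier D, u p = 0) :
    π / area D * l2sq D u ≤ gradsq D u := by
  rw [← inv_div]
  exact inv_mul_le_of_le_mul₀ (div_nonneg (area_nonneg D) pi_nonneg) (gradsq_nonneg D u)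
    (l2sq_le_area_div_pi_mul_gradsq hD hDb hu h0)

theorem setIntegral_mul_lap_self (hD : IsOpen D) (hDb : Bornology.IsBounded D)
    (hu : ContDiff ℝ 2 u) (h0 : ∀ p ∈ frontier D, u p = 0) :
    ∫ p in D, u p * lap u p = -gradsq D u := by
  have hu1 : ContDiff ℝ 1 u := hu.of_le one_le_two
  have hux : ContDiff ℝ 1 (pdx u) := contDiff_pdx hu one_add_one_eq_two.le
  have huy : ContDiff ℝ 1 (pdy u) := contDiff_pdy hu one_add_one_eq_two.le
  have hx : ∫ p in D, u p * pdx (pdx u) p = -l2sq D (pdx u) := by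
    simp only [l2sq, sq]
    exact setIntegral_mul_fderiv_apply_eq_neg hD hDb hu1 hux (by simp +contextual [h0]) _
  have hy : ∫ p in D, u p * pdy (pdy u) p = -l2sq D (pdy u) := by
    simp only [l2sq, sq]
    exact setIntegral_mul_fderiv_apply_eq_neg hD hDb hu1 huy (by simp +contextual [h0]) _
  have hxi : IntegrableOn (fun p => u p * pdx (pdx u) p) D :=
    integrableOn_of_isBounded hDb (hu.continuous.mul (continuous_pdx hux))
  have hyi : IntegrableOn (fun p => u p * pdy (pdy u) p) D :=
    integrableOn_of_isBounded hDb (hu.continuous.mul (continuous_pdy huy))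
  simp only [lap, mul_add]
  rw [integral_add hxi hyi, hx, hy, gradsq_eq_l2sq_pdx_add_l2sq_pdy hDb hu1]
  ring

theorem setIntegral_jac_eq_zero (hD : IsOpen D) (hDb : Bornology.IsBounded D)
    (hu : ContDiff ℝ 2 u) (hv : ContDiff ℝ 1 v) (h0 : ∀ p ∈ frontier D, v p = 0) :
    ∫ p in D, jac u v p = 0 := by
  have hux : ContDiff ℝ 1 (pdx u) := contDiff_pdx hu one_add_one_eq_two.le
  have huy : ContDiff ℝ 1 (pdy u) := contDiff_pdy hu one_add_one_eq_two.le
  have hx : ∫ p in D, pdy u p * pdx v p = -∫ p in D, pdx (pdy u) p * v p :=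
    setIntegral_mul_fderiv_apply_eq_neg hD hDb huy hv (by simp +contextual [h0]) _
  have hy : ∫ p in D, pdx u p * pdy v p = -∫ p in D, pdy (pdx u) p * v p :=
    setIntegral_mul_fderiv_apply_eq_neg hD hDb hux hv (by simp +contextual [h0]) _
  have hxi : IntegrableOn (fun p => pdy u p * pdx v p) D :=
    integrableOn_of_isBounded hDb (huy.continuous.mul (continuous_pdx hv))
  have hyi : IntegrableOn (fun p => pdx u p * pdy v p) D :=
    integrableOn_of_isBounded hDb (hux.continuous.mul (continuous_pdy hv))
  simp only [jac]
  rw [integral_sub hyi hxi, hx, hy]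
  simp only [pdy_pdx_eq_pdx_pdy hu, sub_self]

theorem jac_sq_right (hv : Differentiable ℝ v) (p : ℝ × ℝ) :
    jac u (fun p => v p ^ 2) p = 2 * (v p * jac u v p) := by
  simp only [jac, pdx, pdy, fderiv_fun_pow 2 (hv p)]
  simp only [Nat.add_one_sub_one, pow_one, nsmul_eq_mul, Nat.cast_ofNat, smul_apply, smul_eq_mul]
  ring

theorem setIntegral_mul_jac_self_eq_zero (hD : IsOpen D) (hDb : Bornology.IsBounded D)
    (hu : ContDiff ℝ 2 u) (hv : ContDiff ℝ 1 v) (h0 : ∀ p ∈ frontier D, v p = 0) :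
    ∫ p in D, v p * jac u v p = 0 := by
  have := setIntegral_jac_eq_zero hD hDb hu (hv.pow 2) (by simp +contextual [h0])
  simpa [jac_sq_right (hv.differentiable one_ne_zero), integral_const_mul] using this

theorem gradsq_le_mul_l2sq_lap (hD : IsOpen D) (hDb : Bornology.IsBounded D)
    (hu : ContDiff ℝ 2 u) (h0 : ∀ p ∈ frontier D, u p = 0) {C : ℝ} (hC : 0 ≤ C)
    (hpoincare : l2sq D u ≤ C * gradsq D u) : gradsq D u ≤ C * l2sq D (lap u) := by
  have hcs : gradsq D u ^ 2 ≤ l2sq D u * l2sq D (lap u) := by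
    rw [← neg_sq, ← setIntegral_mul_lap_self hD hDb hu h0]
    exact sq_integral_mul_le (memLp_restrict_of_isBounded hDb hu.continuous)
      (memLp_restrict_of_isBounded hDb (continuous_lap hu))
  rcases (gradsq_nonneg D u).eq_or_lt with hzero | hpos
  · rw [← hzero]
    exact mul_nonneg hC (l2sq_nonneg D _)
  · refine le_of_mul_le_mul_left ?_ hpos
    calc gradsq D u * gradsq D u = gradsq D u ^ 2 := (sq _).symm
      _ ≤ l2sq D u * l2sq D (lap u) := hcs
      _ ≤ C * gradsq D u * l2sq D (lap u) := by gcongr; exact l2sq_nonneg D _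
      _ = gradsq D u * (C * l2sq D (lap u)) := by ring

theorem l2sq_pdx_le_gradsq (hDb : Bornology.IsBounded D) (hu : ContDiff ℝ 1 u) :
    l2sq D (pdx u) ≤ gradsq D u := by
  rw [gradsq_eq_l2sq_pdx_add_l2sq_pdy hDb hu]
  exact le_add_of_nonneg_right (l2sq_nonneg D _)

theorem abs_two_mul_setIntegral_lap_mul_pdx_le (hD : IsOpen D) (hDb : Bornology.IsBounded D)
    (hu : ContDiff ℝ 2 u) (h0 : ∀ p ∈ frontier D, u p = 0) :
    |2 * ∫ p in D, lap u p * pdx u p| ≤ (area D / π + 1) * l2sq D (lap u) := by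
  have hu1 : ContDiff ℝ 1 u := hu.of_le one_le_two
  calc |2 * ∫ p in D, lap u p * pdx u p| ≤ l2sq D (lap u) + l2sq D (pdx u) :=
        abs_two_mul_integral_mul_le (memLp_restrict_of_isBounded hDb (continuous_lap hu))
          (memLp_restrict_of_isBounded hDb (continuous_pdx hu1))
    _ ≤ l2sq D (lap u) + gradsq D u := by grw [l2sq_pdx_le_gradsq hDb hu1]
    _ ≤ l2sq D (lap u) + area D / π * l2sq D (lap u) := by
        grw [gradsq_le_mul_l2sq_lap hD hDb hu h0 (div_nonneg (area_nonneg D) pi_nonneg)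
          (l2sq_le_area_div_pi_mul_gradsq hD hDb hu1 h0)]
    _ = (area D / π + 1) * l2sq D (lap u) := by ring

end Plane

section Time

variable {E F : Type*} [NormedAddCommGroup E] [NormedSpace ℝ E] [NormedAddCommGroup F]
  [NormedSpace ℝ F] {u : ℝ → E → F}

theorem contDiff_apply_of_uncurry {n : WithTop ℕ∞} (hu : ContDiff ℝ n (Function.uncurry u))
    (t : ℝ) : ContDiff ℝ n (u t) :=
  hu.comp (contDiff_prodMk_right t)

theorem hasDerivAt_time (hu : ContDiff ℝ 1 (Function.uncurry u)) (t : ℝ) (p : E) :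
    HasDerivAt (fun s => u s p) (fderiv ℝ (Function.uncurry u) (t, p) (1, 0)) t :=
  HasFDerivAt.comp_hasDerivAt (f := fun s => (s, p)) t
    (hu.differentiable one_ne_zero (t, p)).hasFDerivAt
    ((hasDerivAt_id t).prodMk (hasDerivAt_const t p))

theorem continuous_uncurry_deriv_time (hu : ContDiff ℝ 1 (Function.uncurry u)) :
    Continuous fun z : ℝ × E => deriv (fun s => u s z.2) z.1 := by
  simp only [(hasDerivAt_time hu _ _).deriv]
  exact (hu.continuous_fderiv one_ne_zero).clm_apply continuous_const

theorem continuous_deriv_time (hu : ContDiff ℝ 1 (Function.uncurry u)) (t : ℝ) :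
    Continuous fun p => deriv (fun s => u s p) t :=
  (continuous_uncurry_deriv_time hu).comp (Continuous.prodMk_right t)

variable [ProperSpace E] [MeasurableSpace E] [BorelSpace E] {μ : Measure E}
  [IsFiniteMeasureOnCompacts μ] {D : Set E}

theorem hasDerivAt_setIntegral (hD : MeasurableSet D) (hDb : Bornology.IsBounded D)
    (hu : ContDiff ℝ 1 (Function.uncurry u)) (t : ℝ) :
    HasDerivAt (fun s => ∫ p in D, u s p ∂μ) (∫ p in D, deriv (fun s => u s p) t ∂μ) t := by
  have hcu : ∀ s, Continuous (u s) := fun s => (contDiff_apply_of_uncurry hu s).continuous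
  have hcompact : IsCompact (Set.Icc (t - 1) (t + 1) ×ˢ closure D) :=
    isCompact_Icc.prod hDb.isCompact_closure
  obtain ⟨C, hC⟩ :=
    hcompact.exists_bound_of_continuousOn (continuous_uncurry_deriv_time hu).continuousOn
  refine (hasDerivAt_integral_of_dominated_loc_of_deriv_le (bound := fun _ => C)
    (F' := fun s p => deriv (fun s => u s p) s)
    (Icc_mem_nhds (sub_one_lt t) (lt_add_one t))
    (Eventually.of_forall fun s => (hcu s).aestronglyMeasurable)
    (integrableOn_of_isBounded hDb (hcu t)) (continuous_deriv_time hu t).aestronglyMeasurable ?_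
    (integrableOn_const hDb.measure_lt_top.ne)
    (ae_of_all _ fun p s _ => (hasDerivAt_time hu s p).differentiableAt.hasDerivAt)).2
  filter_upwards [ae_restrict_mem hD] with p hp s hs using hC (s, p) ⟨hs, subset_closure hp⟩

end Time

section Gronwall

theorem le_exp_mul_add_integral_of_hasDerivAt_le {N N' F : ℝ → ℝ} {a b k : ℝ} (hab : a ≤ b)
    (hk : 0 ≤ k) (hN : ∀ t ∈ Set.Icc a b, HasDerivAt N (N' t) t)
    (hF : IntervalIntegrable F volume a b) (hF0 : ∀ t ∈ Set.Icc a b, 0 ≤ F t)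
    (hle : ∀ t ∈ Set.Icc a b, N' t ≤ k * N t + F t) :
    N b ≤ exp (k * (b - a)) * (N a + ∫ t in a..b, F t) := by
  set M : ℝ → ℝ := fun t => exp (-(k * (t - a))) * N t
  have hM : ∀ t ∈ Set.Icc a b,
      HasDerivAt M (exp (-(k * (t - a))) * (N' t - k * N t)) t := fun t ht => by
    have hlin : HasDerivAt (fun s => -(k * (s - a))) (-k) t := by
      simpa using (((hasDerivAt_id t).sub_const a).const_mul k).fun_neg
    exact (hlin.exp.mul (hN t ht)).congr_deriv (by ring)
  have hM_le : ∀ t ∈ Set.Icc a b, exp (-(k * (t - a))) * (N' t - k * N t) ≤ F t := fun t ht =>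
    calc exp (-(k * (t - a))) * (N' t - k * N t) ≤ exp (-(k * (t - a))) * F t := by
          gcongr
          linarith [hle t ht]
      _ ≤ F t := mul_le_of_le_one_left (hF0 t ht)
          (exp_le_one_iff.2 (neg_nonpos.2 (mul_nonneg hk (sub_nonneg.2 ht.1))))
  have hint : M b - M a ≤ ∫ t in a..b, F t :=
    intervalIntegral.sub_le_integral_of_hasDeriv_right_of_le hab
      (fun t ht => (hM t ht).continuousAt.continuousWithinAt)
      (fun t ht => (hM t (Set.Ioo_subset_Icc_self ht)).hasDerivWithinAt)
      ((intervalIntegrable_iff_integrableOn_Icc_of_le hab).1 hF)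
      (fun t ht => hM_le t (Set.Ioo_subset_Icc_self ht))
  have hMa : M a = N a := by simp [M]
  calc N b = exp (k * (b - a)) * M b := by
        rw [← mul_assoc, ← exp_add, add_neg_cancel, exp_zero, one_mul]
    _ ≤ exp (k * (b - a)) * (N a + ∫ t in a..b, F t) := by
        gcongr
        linarith

end Gronwall

section Vorticity

variable {D : Set (ℝ × ℝ)} {β ν r : ℝ} {q ψ f w : ℝ × ℝ → ℝ}

theorem memLp_of_vorticity_eq (hD : MeasurableSet D) (hDb : Bornology.IsBounded D)
    (hq : ContDiff ℝ 2 q) (hψ : ContDiff ℝ 1 ψ) (hw : Continuous w)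
    (heq : ∀ p ∈ D, w p + jac ψ q p + β * pdx ψ p = f p + ν * lap q p - r * q p) :
    MemLp f 2 (volume.restrict D) := by
  have hcont : Continuous fun p => w p + jac ψ q p + β * pdx ψ p - ν * lap q p + r * q p :=
    (((hw.add (continuous_jac hψ (hq.of_le one_le_two))).add
      ((continuous_pdx hψ).const_mul β)).sub ((continuous_lap hq).const_mul ν)).add
      (hq.continuous.const_mul r)
  refine (memLp_congr_ae ?_).1 (memLp_restrict_of_isBounded hDb hcont)
  filter_upwards [ae_restrict_mem hD] with p hp
  linarith [heq p hp]

theorem setIntegral_mul_eq_of_vorticity_eq (hD : IsOpen D) (hDb : Bornology.IsBounded D)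
    (hq : ContDiff ℝ 2 q) (hψ : ContDiff ℝ 2 ψ) (hw : Continuous w)
    (hq0 : ∀ p ∈ frontier D, q p = 0)
    (heq : ∀ p ∈ D, w p + jac ψ q p + β * pdx ψ p = f p + ν * lap q p - r * q p) :
    ∫ p in D, q p * w p = (∫ p in D, q p * f p) - ν * gradsq D q - r * l2sq D q
      - β * ∫ p in D, q p * pdx ψ p := by
  have hq1 : ContDiff ℝ 1 q := hq.of_le one_le_two
  have hψ1 : ContDiff ℝ 1 ψ := hψ.of_le one_le_two
  have hqf : IntegrableOn (fun p => q p * f p) D :=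
    (memLp_restrict_of_isBounded hDb hq.continuous (p := 2)).integrable_mul
      (memLp_of_vorticity_eq hD.measurableSet hDb hq hψ1 hw heq)
  have hqψ : IntegrableOn (fun p => β * (q p * pdx ψ p)) D :=
    integrableOn_of_isBounded hDb ((hq.continuous.mul (continuous_pdx hψ1)).const_mul β)
  have hqlap : IntegrableOn (fun p => ν * (q p * lap q p)) D :=
    integrableOn_of_isBounded hDb ((hq.continuous.mul (continuous_lap hq)).const_mul ν)
  have hqq : IntegrableOn (fun p => r * q p ^ 2) D :=
    integrableOn_of_isBounded hDb ((hq.continuous.pow 2).const_mul r)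
  have hqjac : IntegrableOn (fun p => q p * jac ψ q p) D :=
    integrableOn_of_isBounded hDb (hq.continuous.mul (continuous_jac hψ1 hq1))
  have hdiffusion : IntegrableOn (fun p => q p * f p + ν * (q p * lap q p)) D := hqf.add hqlap
  have hdamping : IntegrableOn (fun p => q p * f p + ν * (q p * lap q p) - r * q p ^ 2) D :=
    hdiffusion.sub hqq
  have hrotation : IntegrableOn (fun p => q p * f p + ν * (q p * lap q p) - r * q p ^ 2
      - β * (q p * pdx ψ p)) D := hdamping.sub hqψ
  calc ∫ p in D, q p * w p
      = ∫ p in D, (q p * f p + ν * (q p * lap q p) - r * q p ^ 2 - β * (q p * pdx ψ p)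
          - q p * jac ψ q p) :=
        setIntegral_congr_fun hD.measurableSet fun p hp => by
          linear_combination q p * heq p hp
    _ = (∫ p in D, q p * f p) + ν * (∫ p in D, q p * lap q p) - r * l2sq D q
          - β * (∫ p in D, q p * pdx ψ p) - ∫ p in D, q p * jac ψ q p := by
        rw [integral_sub hrotation hqjac, integral_sub hdamping hqψ, integral_sub hdiffusion hqq,
          integral_add hqf hqlap, integral_const_mul, integral_const_mul, integral_const_mul, l2sq]
    _ = _ := by
        rw [setIntegral_mul_lap_self hD hDb hq hq0,
          setIntegral_mul_jac_self_eq_zero hD hDb hψ hq1 hq0]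
        ring

theorem setIntegral_two_mul_le_of_vorticity_eq (hD : IsOpen D) (hDb : Bornology.IsBounded D)
    (hν : 0 ≤ ν) (hr : 0 < r) (hq : ContDiff ℝ 2 q) (hψ : ContDiff ℝ 2 ψ) (hw : Continuous w)
    (hqψ : ∀ p ∈ D, q p = lap ψ p) (hq0 : ∀ p ∈ frontier D, q p = 0)
    (hψ0 : ∀ p ∈ frontier D, ψ p = 0)
    (heq : ∀ p ∈ D, w p + jac ψ q p + β * pdx ψ p = f p + ν * lap q p - r * q p) :
    2 * ∫ p in D, q p * w p ≤ -2 * alphaConst D β ν r * l2sq D q + 1 / r * l2sq D f := by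
  have hforcing : 2 * ∫ p in D, q p * f p ≤ r * l2sq D q + 1 / r * l2sq D f :=
    two_mul_integral_mul_le (memLp_restrict_of_isBounded hDb hq.continuous)
      (memLp_of_vorticity_eq hD.measurableSet hDb hq (hψ.of_le one_le_two) hw heq) hr
  have hqψx : ∫ p in D, q p * pdx ψ p = ∫ p in D, lap ψ p * pdx ψ p :=
    setIntegral_congr_fun hD.measurableSet fun p hp => by simp only [hqψ p hp]
  have hlap : l2sq D (lap ψ) = l2sq D q :=
    setIntegral_congr_fun hD.measurableSet fun p hp => by simp only [hqψ p hp]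
  have hβ : -(β * (2 * ∫ p in D, q p * pdx ψ p)) ≤ |β| * ((area D / π + 1) * l2sq D q) := by
    rw [hqψx, ← hlap]
    grw [neg_le_abs, abs_mul, abs_two_mul_setIntegral_lap_mul_pdx_le hD hDb hψ hψ0]
  have hν' : ν * (π / area D * l2sq D q) ≤ ν * gradsq D q := by
    grw [pi_div_area_mul_l2sq_le_gradsq hD hDb (hq.of_le one_le_two) hq0]
  calc 2 * ∫ p in D, q p * w p
      = 2 * (∫ p in D, q p * f p) - 2 * (ν * gradsq D q) - 2 * (r * l2sq D q)
          - β * (2 * ∫ p in D, q p * pdx ψ p) := by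
        rw [setIntegral_mul_eq_of_vorticity_eq hD hDb hq hψ hw hq0 heq]
        ring
    _ ≤ (r * l2sq D q + 1 / r * l2sq D f) - 2 * (ν * (π / area D * l2sq D q))
          - 2 * (r * l2sq D q) + |β| * ((area D / π + 1) * l2sq D q) := by linarith
    _ = -2 * alphaConst D β ν r * l2sq D q + 1 / r * l2sq D f := by
        unfold alphaConst
        ring

end Vorticity

section Evolution

variable {D : Set (ℝ × ℝ)} {β ν r : ℝ} {q ψ f : ℝ → ℝ × ℝ → ℝ}

theorem hasDerivAt_l2sq (hD : MeasurableSet D) (hDb : Bornology.IsBounded D)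
    (hq : ContDiff ℝ 1 (Function.uncurry q)) (t : ℝ) :
    HasDerivAt (fun s => l2sq D (q s)) (2 * ∫ p in D, q t p * deriv (fun s => q s p) t) t := by
  refine (hasDerivAt_setIntegral (u := fun s p => q s p ^ 2) hD hDb (hq.pow 2) t).congr_deriv ?_
  rw [← integral_const_mul]
  congr 1 with p
  rw [((hasDerivAt_time hq t p).differentiableAt.hasDerivAt.fun_pow 2).deriv]
  ring

theorem two_mul_setIntegral_mul_deriv_le_of_solvesBVE (hD : IsOpen D)
    (hDb : Bornology.IsBounded D) (hν : 0 ≤ ν) (hr : 0 < r)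
    (hq : ContDiff ℝ 1 (Function.uncurry q)) (hq2 : ∀ t, 0 ≤ t → ContDiff ℝ 2 (q t))
    (hψ : ∀ t, 0 ≤ t → ContDiff ℝ 2 (ψ t)) (hsol : SolvesBVE D β ν r q ψ f fun _ _ => 0)
    {t : ℝ} (ht : 0 ≤ t) :
    2 * ∫ p in D, q t p * deriv (fun s => q s p) t
      ≤ 2 * |alphaConst D β ν r| * l2sq D (q t) + 1 / r * l2sq D (f t) := by
  obtain ⟨hqψ, hbd, heq⟩ := hsol
  grw [setIntegral_two_mul_le_of_vorticity_eq hD hDb hν hr (hq2 t ht) (hψ t ht)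
      (continuous_deriv_time hq t) (hqψ t ht) (fun p hp => (hbd t ht p hp).1)
      (fun p hp => (hbd t ht p hp).2) (fun p hp => (heq t ht p hp).trans (add_zero _)),
    neg_mul, ← mul_neg, neg_le_abs]
  exact l2sq_nonneg D _

end Evolution

theorem enstrophy_uniform_estimate_general
    (D : Set (ℝ × ℝ)) (hD : IsOpen D) (hDb : Bornology.IsBounded D)
    (β ν r : ℝ) (hν : 0 ≤ ν) (hr : 0 < r)
    (q ψ f : ℝ → ℝ × ℝ → ℝ) (q₀ : ℝ × ℝ → ℝ)
    (hq : ContDiff ℝ 1 (Function.uncurry q)) (hq2 : ∀ t, 0 ≤ t → ContDiff ℝ 2 (q t))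
    (hψ : ∀ t, 0 ≤ t → ContDiff ℝ 2 (ψ t)) (hf : MeanSquareIntegrable D f)
    (hsol : SolvesBVE D β ν r q ψ f (fun _ _ => 0)) (hinit : q 0 = q₀) :
    ∀ T, 0 < T → ∀ t ∈ Set.Icc (0:ℝ) T,
      l2sq D (q t) ≤
        l2sq D q₀ * Real.exp (2 * |alphaConst D β ν r| * T)
          + (1 / r) * Real.exp (2 * |alphaConst D β ν r| * T)
              * ∫ s in (0:ℝ)..T, l2sq D (f s) := by
  subst hinit
  intro T hT t ht
  have hF0 : ∀ s, 0 ≤ 1 / r * l2sq D (f s) := fun s =>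
    mul_nonneg (one_div_nonneg.2 hr.le) (l2sq_nonneg D _)
  have hF : IntervalIntegrable (fun s => 1 / r * l2sq D (f s)) volume 0 T :=
    (hf.2 T hT).const_mul _
  set k := 2 * |alphaConst D β ν r|
  calc l2sq D (q t)
      ≤ exp (k * (t - 0)) * (l2sq D (q 0) + ∫ s in (0 : ℝ)..t, 1 / r * l2sq D (f s)) :=
        le_exp_mul_add_integral_of_hasDerivAt_le ht.1 (by positivity)
          (fun s _ => hasDerivAt_l2sq hD.measurableSet hDb hq s)
          (hF.mono_set (Set.uIcc_subset_uIcc_left (Set.Icc_subset_uIcc ht)))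
          (fun s _ => hF0 s)
          (fun s hs => two_mul_setIntegral_mul_deriv_le_of_solvesBVE hD hDb hν hr hq hq2
            hψ hsol hs.1)
    _ ≤ exp (k * T) * (l2sq D (q 0) + ∫ s in (0 : ℝ)..T, 1 / r * l2sq D (f s)) := by
        gcongr
        · exact add_nonneg (l2sq_nonneg D _)
            (intervalIntegral.integral_nonneg ht.1 fun s _ => hF0 s)
        · exact (sub_zero t).trans_le ht.2
        · exact intervalIntegral.integral_mono_interval le_rfl ht.1 ht.2 (ae_of_all _ hF0) hF
    _ = _ := by
        rw [intervalIntegral.integral_const_mul]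
        ring

/-- Lemma 1, second enstrophy estimate.
If `q` is a (sufficiently smooth) solution of the barotropic vorticity equation
`q_t + J(ψ,q) + βψ_x = f + νΔq - rq`, `q = Δψ`, with zero boundary conditions
on `∂D` and initial condition `q(·,·,0) = q₀`, then for every `T > 0` and all
`0 ≤ t ≤ T`,
`‖q(t)‖² ≤ ‖q₀‖² e^{2|α|T} + (1/r) e^{2|α|T} ∫₀ᵀ ‖f(s)‖² ds`,
where `α = r/2 + πν/|D| - (|β|/2)(|D|/π + 1)`. -/
theorem enstrophy_uniform_estimate
    (D : Set (ℝ × ℝ)) (hD : IsOpen D) (hDb : Bornology.IsBounded D)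
    (β ν r : ℝ) (hν : 0 < ν) (hr : 0 < r)
    (q ψ f : ℝ → ℝ × ℝ → ℝ) (q₀ : ℝ × ℝ → ℝ)
    (hq : SmoothField q) (hψ : SmoothField ψ)
    (hf : MeanSquareIntegrable D f)
    (hsol : SolvesBVE D β ν r q ψ f (fun _ _ => 0))
    (hinit : q 0 = q₀) :
    ∀ T, 0 < T → ∀ t ∈ Set.Icc (0:ℝ) T,
      l2sq D (q t) ≤
        l2sq D q₀ * Real.exp (2 * |alphaConst D β ν r| * T)
          + (1 / r) * Real.exp (2 * |alphaConst D β ν r| * T)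
              * ∫ s in (0:ℝ)..T, l2sq D (f s) :=
  enstrophy_uniform_estimate_general D hD hDb β ν r hν.le hr q ψ f q₀ (contDiff_infty.1 hq 1)
    (fun t _ => contDiff_infty.1 (contDiff_apply_of_uncurry hq t) 2)
    (fun t _ => contDiff_infty.1 (contDiff_apply_of_uncurry hψ t) 2) hf hsol hinit
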